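/- Let s₀ ∈ (0,1). There exists a constant c = c(s₀) > 0 with the following property. Let Q ⊂ ℝ² be the boundary of a square with side length 2t, with sides L₁, L₂, L₃, L₄, let s ∈ [s₀,1), and let u : Q → 𝕊¹ be continuous with |deg(u,Q)| = d. Then [u]²_{H^{(1+s)/2}(L₁)} + [u]²_{H^{(1+s)/2}(L₂)} + [u]²_{H^{(1+s)/2}(L₃)} + [u]²_{H^{(1+s)/2}(L₄)} ≥ c · d/(1-s) · t^{-s}. -/

import Mathlib

open MeasureTheory Set Metric
open scoped ENNReal RealInnerProductSpace

noncomputable section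

/-- The four sides of the (boundary of the) square centered at z, with orthonormal
directions v, w and half side length t. -/
def sqSide1 (z v w : EuclideanSpace ℝ (Fin 2)) (t : ℝ) : Set (EuclideanSpace ℝ (Fin 2)) :=
  (fun a : ℝ => z + a • v - t • w) '' Icc (-t) t

def sqSide2 (z v w : EuclideanSpace ℝ (Fin 2)) (t : ℝ) : Set (EuclideanSpace ℝ (Fin 2)) :=
  (fun b : ℝ => z + t • v + b • w) '' Icc (-t) t

def sqSide3 (z v w : EuclideanSpace ℝ (Fin 2)) (t : ℝ) : Set (EuclideanSpace ℝ (Fin 2)) :=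
  (fun a : ℝ => z + a • v + t • w) '' Icc (-t) t

def sqSide4 (z v w : EuclideanSpace ℝ (Fin 2)) (t : ℝ) : Set (EuclideanSpace ℝ (Fin 2)) :=
  (fun b : ℝ => z - t • v + b • w) '' Icc (-t) t

/-- The boundary Q of the square. -/
def squareBdry (z v w : EuclideanSpace ℝ (Fin 2)) (t : ℝ) : Set (EuclideanSpace ℝ (Fin 2)) :=
  sqSide1 z v w t ∪ sqSide2 z v w t ∪ sqSide3 z v w t ∪ sqSide4 z v w t

/-- The one-dimensional Gagliardo H^{(1+s)/2}-seminorm (squared) of u along a segment L,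
with respect to the 1-dimensional Hausdorff measure. -/
def segSeminorm (s : ℝ) (u : EuclideanSpace ℝ (Fin 2) → ℂ)
    (L : Set (EuclideanSpace ℝ (Fin 2))) : ℝ≥0∞ :=
  ∫⁻ x in L, ∫⁻ y in L,
    ENNReal.ofReal (‖u x - u y‖ ^ 2 / dist x y ^ (2 + s)) ∂μH[1] ∂μH[1]

/-!
Write `F h` for the squared `L²` norm of the increment of a function by `h` on an interval. Going
from `x` to `x + 2h` through `x + h` gives `F (2h) ≤ 4 F h`. The Gagliardo energy is the integral of
`F h / |h| ^ (2 + s)`, so its part over `|h| ≤ ρ` is at most `2 ^ (1 - s)` times its part over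
`|h| ≤ ρ / 2`, and the shifts with `ρ / 2 < |h| ≤ ρ` carry at most a share `1 - s` of it. Hence the
fractional Poincaré inequality on an interval holds with a constant of order `1 - s`, and
telescoping the averages over intervals that shrink to an endpoint turns it into
`‖f a - f b‖² ≲ (1 - s) (b - a)ˢ [f]²`.

A map of degree `d` has a continuous phase on `Q` minus one point, and the phase takes all values of
an interval of length `d` (in turns). By pigeonhole the phase varies by a fixed multiple of `d`
along a segment of some side. This segment contains `d` disjoint arcs on which the phase varies by a
fixed amount, so each of them carries energy at least of order `1 / ((1 - s) tˢ)`, and energies of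
disjoint arcs add up.
-/

open Filter Interval Module Topology

section Energy

variable {X E : Type*} [Dist X] [MeasurableSpace X] [NormedAddCommGroup E]
  {μ : Measure X} {r : ℝ} {f g : X → E} {S T U : Set X}

/-- The double integral over `S` that defines the squared Gagliardo seminorm, with an arbitrary
exponent `r` in the kernel: in dimension `n`, the choice `r = n + 2 * α` gives `[f]²_{H^α(S)}`. -/
def gagliardoEnergy (μ : Measure X) (r : ℝ) (f : X → E) (S : Set X) : ℝ≥0∞ :=
  ∫⁻ x in S, ∫⁻ y in S, ENNReal.ofReal (‖f x - f y‖ ^ 2 / dist x y ^ r) ∂μ ∂μ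

lemma gagliardoEnergy_mono (h : S ⊆ T) : gagliardoEnergy μ r f S ≤ gagliardoEnergy μ r f T :=
  (lintegral_mono_set h).trans <| lintegral_mono fun _ ↦ lintegral_mono_set h

lemma gagliardoEnergy_congr (hS : MeasurableSet S) (h : EqOn f g S) :
    gagliardoEnergy μ r f S = gagliardoEnergy μ r g S :=
  setLIntegral_congr_fun hS fun x hx ↦ setLIntegral_congr_fun hS fun y hy ↦ by
    simp only [h hx, h hy]

lemma gagliardoEnergy_add_le_of_disjoint (hT : MeasurableSet T) (hdisj : Disjoint S T)
    (hS : S ⊆ U) (hTU : T ⊆ U) :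
    gagliardoEnergy μ r f S + gagliardoEnergy μ r f T ≤ gagliardoEnergy μ r f U :=
  calc gagliardoEnergy μ r f S + gagliardoEnergy μ r f T
      ≤ (∫⁻ x in S, ∫⁻ y in U, ENNReal.ofReal (‖f x - f y‖ ^ 2 / dist x y ^ r) ∂μ ∂μ)
        + ∫⁻ x in T, ∫⁻ y in U, ENNReal.ofReal (‖f x - f y‖ ^ 2 / dist x y ^ r) ∂μ ∂μ := by
        unfold gagliardoEnergy; gcongr
    _ = ∫⁻ x in S ∪ T, ∫⁻ y in U, ENNReal.ofReal (‖f x - f y‖ ^ 2 / dist x y ^ r) ∂μ ∂μ :=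
        (lintegral_union hT hdisj).symm
    _ ≤ gagliardoEnergy μ r f U := lintegral_mono_set (union_subset hS hTU)

end Energy

lemma gagliardoEnergy_hausdorffMeasure_image {Y X E : Type*} [MetricSpace Y] [CompleteSpace Y]
    [MeasurableSpace Y] [BorelSpace Y] [MetricSpace X] [MeasurableSpace X] [BorelSpace X]
    [NormedAddCommGroup E] {σ : Y → X} (hσ : Isometry σ) {d : ℝ} (hd : 0 ≤ d) (r : ℝ)
    (u : X → E) (S : Set Y) :
    gagliardoEnergy μH[d] r u (σ '' S) = gagliardoEnergy μH[d] r (u ∘ σ) S := by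
  have hemb : MeasurableEmbedding σ := hσ.isClosedEmbedding.measurableEmbedding
  have hmap : (μH[d] : Measure X).restrict (σ '' S) = ((μH[d] : Measure Y).restrict S).map σ := by
    rw [← preimage_image_eq S hσ.injective, ← hemb.restrict_map,
      hσ.map_hausdorffMeasure (Or.inl hd), preimage_image_eq S hσ.injective,
      Measure.restrict_restrict_of_subset (image_subset_range _ _)]
  simp only [gagliardoEnergy, hmap, hemb.lintegral_map, hσ.dist_eq, Function.comp_apply]

lemma lintegral_lintegral_eq_shift {G : Type*} [AddGroup G] [MeasurableSpace G] [MeasurableAdd₂ G]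
    {μ : Measure G} [SFinite μ] [μ.IsAddLeftInvariant] {S T : Set G} (hS : MeasurableSet S)
    (hT : MeasurableSet T) {k : G → G → ℝ≥0∞} (hk : Measurable (Function.uncurry k)) :
    ∫⁻ x in S, ∫⁻ y in T, k x y ∂μ ∂μ =
      ∫⁻ h, ∫⁻ x in S ∩ (· + h) ⁻¹' T, k x (x + h) ∂μ ∂μ := by
  set K : G × G → ℝ≥0∞ := (S ×ˢ T).indicator (Function.uncurry k)
  have hK : Measurable K := hk.indicator (hS.prod hT)
  have hK_apply (x y : G) : K (x, y) = S.indicator (fun x ↦ T.indicator (k x) y) x := by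
    by_cases hx : x ∈ S <;> by_cases hy : y ∈ T <;> simp [K, hx, hy]
  calc ∫⁻ x in S, ∫⁻ y in T, k x y ∂μ ∂μ
      = ∫⁻ x, ∫⁻ y, K (x, y) ∂μ ∂μ := by
        rw [← lintegral_indicator hS]
        refine lintegral_congr fun x ↦ ?_
        by_cases hx : x ∈ S <;> simp [hK_apply, hx, lintegral_indicator hT]
    _ = ∫⁻ x, ∫⁻ h, K (x, x + h) ∂μ ∂μ :=
        lintegral_congr fun x ↦ (lintegral_add_left_eq_self (fun y ↦ K (x, y)) x).symm
    _ = ∫⁻ h, ∫⁻ x, K (x, x + h) ∂μ ∂μ :=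
        lintegral_lintegral_swap
          (hK.comp (measurable_fst.prodMk measurable_add)).aemeasurable
    _ = ∫⁻ h, ∫⁻ x in S ∩ (· + h) ⁻¹' T, k x (x + h) ∂μ ∂μ := by
        refine lintegral_congr fun h ↦ ?_
        rw [← lintegral_indicator (hS.inter (measurable_add_const h hT))]
        refine lintegral_congr fun x ↦ ?_
        by_cases hx : x ∈ S <;> by_cases hy : x + h ∈ T <;> simp [hK_apply, hx, hy]

section ShiftEnergy

variable {V E : Type*} [NormedAddCommGroup V] [MeasurableSpace V] [NormedAddCommGroup E]
  {μ : Measure V} {f : V → E} {S : Set V} {r ρ : ℝ}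

/-- The squared `L²` norm of the increment of `f` under translation by `h`, taken over the points
of `S` that stay in `S`. -/
def shiftEnergy (μ : Measure V) (f : V → E) (S : Set V) (h : V) : ℝ≥0∞ :=
  ∫⁻ x in S ∩ (· + h) ⁻¹' S, ENNReal.ofReal (‖f x - f (x + h)‖ ^ 2) ∂μ

/-- The part of the Gagliardo energy that comes from the pairs at distance at most `ρ`, written as
an integral over their difference (see `gagliardoEnergy_eq_lintegral_shiftEnergy`). -/
def truncatedEnergy (μ : Measure V) (r : ℝ) (f : V → E) (S : Set V) (ρ : ℝ) : ℝ≥0∞ :=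
  ∫⁻ h in closedBall 0 ρ, shiftEnergy μ f S h * ENNReal.ofReal (‖h‖ ^ (-r)) ∂μ

lemma shiftEnergy_eq_zero_of_diam_lt (hbdd : Bornology.IsBounded S) {h : V} (hh : diam S < ‖h‖) :
    shiftEnergy μ f S h = 0 := by
  have hempty : S ∩ (· + h) ⁻¹' S = ∅ := by
    refine eq_empty_of_forall_notMem fun x hx ↦ hh.not_ge ?_
    simpa using dist_le_diam_of_mem hbdd hx.1 hx.2
  simp [shiftEnergy, hempty]

lemma support_shiftEnergy_subset_iUnion_annulus (hbdd : Bornology.IsBounded S) :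
    (shiftEnergy μ f S).support ⊆
      ⋃ k : ℕ, closedBall 0 (diam S * (1 / 2) ^ k) \ closedBall 0 (diam S * (1 / 2) ^ k / 2) := by
  intro h hh
  have hle : ‖h‖ ≤ diam S := not_lt.1 fun hlt ↦ hh (shiftEnergy_eq_zero_of_diam_lt hbdd hlt)
  have hne : 0 < ‖h‖ := norm_pos_iff.2 <| by rintro rfl; simp [shiftEnergy] at hh
  have hpos : 0 < diam S := hne.trans_le hle
  obtain ⟨k, hk, hk'⟩ := exists_nat_pow_near_of_lt_one (div_pos hne hpos)
    (div_le_one_of_le₀ hle hpos.le) one_half_pos one_half_lt_one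
  rw [lt_div_iff₀' hpos, pow_succ] at hk
  rw [div_le_iff₀' hpos] at hk'
  refine mem_iUnion.2 ⟨k, by simpa using hk', ?_⟩
  simp only [mem_closedBall_zero_iff, not_le]
  linarith

variable [NormedSpace ℝ V] [BorelSpace V] [μ.IsAddHaarMeasure]

lemma shiftEnergy_two_smul_le (hf : StronglyMeasurable f) (hS : MeasurableSet S)
    (hconv : Convex ℝ S) (h : V) :
    shiftEnergy μ f S ((2 : ℝ) • h) ≤ 4 * shiftEnergy μ f S h := by
  set D : V → ℝ≥0∞ := fun x ↦ ENNReal.ofReal (‖f x - f (x + h)‖ ^ 2)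
  have hD : Measurable D :=
    have hdiff := hf.sub (hf.comp_measurable (measurable_add_const h))
    (hdiff.norm.measurable.pow_const 2).ennreal_ofReal
  set A : Set V := S ∩ (· + (2 : ℝ) • h) ⁻¹' S
  set B : Set V := S ∩ (· + h) ⁻¹' S
  have hB : MeasurableSet B := hS.inter (measurable_add_const h hS)
  have hmid {x : V} (hx : x ∈ A) : x + h ∈ S := by
    have : midpoint ℝ x (x + (2 : ℝ) • h) = x + h := by
      rw [midpoint_eq_smul_add, invOf_eq_inv]; module
    exact this ▸ hconv.midpoint_mem hx.1 hx.2
  have hadd (x : V) : x + (2 : ℝ) • h = x + h + h := by module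
  have hsplit (x : V) : ENNReal.ofReal (‖f x - f (x + (2 : ℝ) • h)‖ ^ 2) ≤
      2 * (D x + D (x + h)) := by
    rw [← ENNReal.ofReal_add (by positivity) (by positivity), ← ENNReal.ofReal_ofNat 2,
      ← ENNReal.ofReal_mul zero_le_two, hadd]
    refine ENNReal.ofReal_le_ofReal (le_trans ?_ add_sq_le)
    gcongr
    exact norm_sub_le_norm_sub_add_norm_sub _ _ _
  have hfirst : ∫⁻ x in A, D x ∂μ ≤ shiftEnergy μ f S h :=
    lintegral_mono_set fun x hx ↦ ⟨hx.1, hmid hx⟩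
  have hsecond : ∫⁻ x in A, D (x + h) ∂μ ≤ shiftEnergy μ f S h := by
    rw [shiftEnergy, ← (measurePreserving_add_right μ h).setLIntegral_comp_preimage hB hD]
    exact lintegral_mono_set fun x hx ↦ ⟨hmid hx, by simpa [hadd] using hx.2⟩
  calc shiftEnergy μ f S ((2 : ℝ) • h)
      ≤ ∫⁻ x in A, 2 * (D x + D (x + h)) ∂μ := lintegral_mono hsplit
    _ = 2 * (∫⁻ x in A, D x ∂μ + ∫⁻ x in A, D (x + h) ∂μ) := by
        rw [lintegral_const_mul' _ _ ENNReal.ofNat_ne_top, lintegral_add_left hD]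
    _ ≤ 2 * (shiftEnergy μ f S h + shiftEnergy μ f S h) := by gcongr
    _ = 4 * shiftEnergy μ f S h := by ring

variable [FiniteDimensional ℝ V]

lemma lintegral_sq_norm_sub_eq_lintegral_shiftEnergy (hf : StronglyMeasurable f)
    (hS : MeasurableSet S) :
    ∫⁻ x in S, ∫⁻ y in S, ENNReal.ofReal (‖f x - f y‖ ^ 2) ∂μ ∂μ =
      ∫⁻ h, shiftEnergy μ f S h ∂μ := by
  have hdiff : StronglyMeasurable fun p : V × V ↦ f p.1 - f p.2 :=
    (hf.comp_measurable measurable_fst).sub (hf.comp_measurable measurable_snd)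
  exact lintegral_lintegral_eq_shift hS hS (hdiff.norm.measurable.pow_const 2).ennreal_ofReal

lemma gagliardoEnergy_eq_lintegral_shiftEnergy (hf : StronglyMeasurable f) (hS : MeasurableSet S) :
    gagliardoEnergy μ r f S = ∫⁻ h, shiftEnergy μ f S h * ENNReal.ofReal (‖h‖ ^ (-r)) ∂μ := by
  have hdiff : StronglyMeasurable fun p : V × V ↦ f p.1 - f p.2 :=
    (hf.comp_measurable measurable_fst).sub (hf.comp_measurable measurable_snd)
  have hkernel : Measurable (Function.uncurry fun x y : V ↦
      ENNReal.ofReal (‖f x - f y‖ ^ 2 / dist x y ^ r)) :=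
    ((hdiff.norm.measurable.pow_const 2).div (measurable_dist.pow_const r)).ennreal_ofReal
  rw [gagliardoEnergy, lintegral_lintegral_eq_shift hS hS hkernel]
  refine lintegral_congr fun h ↦ ?_
  rw [shiftEnergy, ← lintegral_mul_const' _ _ ENNReal.ofReal_ne_top]
  refine lintegral_congr fun x ↦ ?_
  rw [dist_self_add_right, ← ENNReal.ofReal_mul (by positivity), Real.rpow_neg (norm_nonneg h),
    div_eq_mul_inv]

lemma truncatedEnergy_le_gagliardoEnergy (hf : StronglyMeasurable f) (hS : MeasurableSet S) :
    truncatedEnergy μ r f S ρ ≤ gagliardoEnergy μ r f S := by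
  rw [gagliardoEnergy_eq_lintegral_shiftEnergy hf hS]
  exact setLIntegral_le_lintegral _ _

lemma setLIntegral_eq_mul_setLIntegral_comp_smul {c : ℝ} (hc : c ≠ 0) (g : V → ℝ≥0∞) (T : Set V) :
    ∫⁻ x in T, g x ∂μ =
      ENNReal.ofReal (|c| ^ finrank ℝ V) * ∫⁻ x in (c • ·) ⁻¹' T, g (c • x) ∂μ := by
  have hemb : MeasurableEmbedding (c • · : V → V) :=
    (Homeomorph.smulOfNeZero c hc).measurableEmbedding
  have hpow : 0 < |c| ^ finrank ℝ V := by positivity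
  rw [← hemb.lintegral_map, ← hemb.restrict_map, Measure.map_addHaar_smul μ hc,
    Measure.restrict_smul, lintegral_smul_measure, smul_eq_mul, ← mul_assoc, abs_inv, abs_pow,
    ← ENNReal.ofReal_mul hpow.le, mul_inv_cancel₀ hpow.ne', ENNReal.ofReal_one, one_mul]

lemma truncatedEnergy_le_mul_truncatedEnergy_half (hf : StronglyMeasurable f)
    (hS : MeasurableSet S) (hconv : Convex ℝ S) :
    truncatedEnergy μ r f S ρ ≤
      ENNReal.ofReal (2 ^ (finrank ℝ V + 2 - r)) * truncatedEnergy μ r f S (ρ / 2) := by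
  have hball : ((2 : ℝ) • ·) ⁻¹' closedBall (0 : V) ρ = closedBall 0 (ρ / 2) := by
    ext h
    simp [norm_smul, le_div_iff₀', mul_comm]
  have hconst : ENNReal.ofReal (|2| ^ finrank ℝ V) * (4 * ENNReal.ofReal (2 ^ (-r))) =
      ENNReal.ofReal (2 ^ (finrank ℝ V + 2 - r)) := by
    rw [← ENNReal.ofReal_ofNat 4, ← ENNReal.ofReal_mul zero_le_four,
      ← ENNReal.ofReal_mul (by positivity), sub_eq_add_neg, Real.rpow_add two_pos,
      Real.rpow_add two_pos, Real.rpow_natCast, abs_two]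
    norm_num [mul_assoc]
  have hweight (h : V) : shiftEnergy μ f S ((2 : ℝ) • h) * ENNReal.ofReal (‖(2 : ℝ) • h‖ ^ (-r)) ≤
      4 * ENNReal.ofReal (2 ^ (-r)) * (shiftEnergy μ f S h * ENNReal.ofReal (‖h‖ ^ (-r))) := by
    rw [norm_smul, Real.norm_ofNat, Real.mul_rpow zero_le_two (norm_nonneg h),
      ENNReal.ofReal_mul (by positivity), mul_mul_mul_comm]
    gcongr
    exact shiftEnergy_two_smul_le hf hS hconv h
  calc truncatedEnergy μ r f S ρ
      = ENNReal.ofReal (|2| ^ finrank ℝ V) * ∫⁻ h in closedBall 0 (ρ / 2),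
          shiftEnergy μ f S ((2 : ℝ) • h) * ENNReal.ofReal (‖(2 : ℝ) • h‖ ^ (-r)) ∂μ := by
        rw [truncatedEnergy, setLIntegral_eq_mul_setLIntegral_comp_smul two_ne_zero, hball]
    _ ≤ ENNReal.ofReal (|2| ^ finrank ℝ V) * ∫⁻ h in closedBall 0 (ρ / 2),
          4 * ENNReal.ofReal (2 ^ (-r)) *
            (shiftEnergy μ f S h * ENNReal.ofReal (‖h‖ ^ (-r))) ∂μ :=
        mul_le_mul_right (lintegral_mono hweight) _
    _ = ENNReal.ofReal (2 ^ (finrank ℝ V + 2 - r)) * truncatedEnergy μ r f S (ρ / 2) := by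
        rw [lintegral_const_mul' _ _ (by finiteness), ← mul_assoc, hconst, truncatedEnergy]

lemma setLIntegral_annulus_le_mul_truncatedEnergy (hf : StronglyMeasurable f)
    (hS : MeasurableSet S) (hconv : Convex ℝ S) (hr : finrank ℝ V + 1 ≤ r)
    (hr' : r < finrank ℝ V + 2) (hρ : 0 ≤ ρ) :
    ∫⁻ h in closedBall 0 ρ \ closedBall 0 (ρ / 2),
        shiftEnergy μ f S h * ENNReal.ofReal (‖h‖ ^ (-r)) ∂μ ≤
      ENNReal.ofReal (finrank ℝ V + 2 - r) * truncatedEnergy μ r f S ρ := by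
  set p : ℝ := finrank ℝ V + 2 - r
  have hp : 0 < p := by linarith
  have hpow : (2 : ℝ) ^ p ≤ 1 + p := by
    have := rpow_one_add_le_one_add_mul_self (s := 1) (by norm_num) hp.le (by linarith)
    norm_num at this
    exact this
  set A := ∫⁻ h in closedBall 0 ρ \ closedBall 0 (ρ / 2),
    shiftEnergy μ f S h * ENNReal.ofReal (‖h‖ ^ (-r)) ∂μ
  have hsplit : truncatedEnergy μ r f S ρ = truncatedEnergy μ r f S (ρ / 2) + A := by
    have hsub : closedBall (0 : V) (ρ / 2) ⊆ closedBall 0 ρ :=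
      closedBall_subset_closedBall (half_le_self hρ)
    simp only [truncatedEnergy, A]
    rw [← lintegral_inter_add_sdiff _ (closedBall 0 ρ) measurableSet_closedBall,
      inter_eq_self_of_subset_right hsub]
  rcases eq_or_ne (truncatedEnergy μ r f S (ρ / 2)) ∞ with hinf | hfin
  · rw [hsplit, hinf, top_add, ENNReal.mul_top (by simpa using hp)]
    exact le_top
  · have hle : truncatedEnergy μ r f S (ρ / 2) + A ≤
        truncatedEnergy μ r f S (ρ / 2) + ENNReal.ofReal p * truncatedEnergy μ r f S (ρ / 2) :=
      calc truncatedEnergy μ r f S (ρ / 2) + A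
          ≤ ENNReal.ofReal (1 + p) * truncatedEnergy μ r f S (ρ / 2) := by
            rw [← hsplit]
            refine (truncatedEnergy_le_mul_truncatedEnergy_half hf hS hconv).trans ?_
            gcongr
        _ = _ := by
            rw [ENNReal.ofReal_add zero_le_one hp.le, ENNReal.ofReal_one, one_add_mul]
    refine ((ENNReal.add_le_add_iff_left hfin).1 hle).trans ?_
    rw [hsplit]
    gcongr
    exact le_self_add

lemma setLIntegral_shiftEnergy_annulus_le (hf : StronglyMeasurable f) (hS : MeasurableSet S)
    (hconv : Convex ℝ S) (hr : finrank ℝ V + 1 ≤ r) (hr' : r < finrank ℝ V + 2) (hρ : 0 < ρ) :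
    ∫⁻ h in closedBall 0 ρ \ closedBall 0 (ρ / 2), shiftEnergy μ f S h ∂μ ≤
      ENNReal.ofReal ((finrank ℝ V + 2 - r) * ρ ^ r) * gagliardoEnergy μ r f S := by
  have hweight : ∀ h ∈ closedBall (0 : V) ρ \ closedBall 0 (ρ / 2), shiftEnergy μ f S h ≤
      ENNReal.ofReal (ρ ^ r) * (shiftEnergy μ f S h * ENNReal.ofReal (‖h‖ ^ (-r))) := by
    intro h hh
    simp only [Set.mem_sdiff, mem_closedBall_zero_iff, not_le] at hh
    have hpos : 0 < ‖h‖ := by linarith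
    have hone : 1 ≤ ρ ^ r * ‖h‖ ^ (-r) := by
      rw [Real.rpow_neg hpos.le, ← div_eq_mul_inv, one_le_div (by positivity)]
      exact Real.rpow_le_rpow hpos.le hh.1 (by linarith [(finrank ℝ V).cast_nonneg (α := ℝ)])
    calc shiftEnergy μ f S h
        = shiftEnergy μ f S h * ENNReal.ofReal 1 := by simp
      _ ≤ shiftEnergy μ f S h * ENNReal.ofReal (ρ ^ r * ‖h‖ ^ (-r)) := by gcongr
      _ = _ := by rw [ENNReal.ofReal_mul (by positivity)]; ring
  calc ∫⁻ h in closedBall 0 ρ \ closedBall 0 (ρ / 2), shiftEnergy μ f S h ∂μ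
      ≤ ∫⁻ h in closedBall 0 ρ \ closedBall 0 (ρ / 2), ENNReal.ofReal (ρ ^ r) *
          (shiftEnergy μ f S h * ENNReal.ofReal (‖h‖ ^ (-r))) ∂μ :=
        setLIntegral_mono' (measurableSet_closedBall.diff measurableSet_closedBall) hweight
    _ ≤ ENNReal.ofReal (ρ ^ r) *
          (ENNReal.ofReal (finrank ℝ V + 2 - r) * gagliardoEnergy μ r f S) := by
        rw [lintegral_const_mul' _ _ ENNReal.ofReal_ne_top]
        gcongr
        refine (setLIntegral_annulus_le_mul_truncatedEnergy hf hS hconv hr hr' hρ.le).trans ?_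
        gcongr
        exact truncatedEnergy_le_gagliardoEnergy hf hS
    _ = _ := by rw [← mul_assoc, ← ENNReal.ofReal_mul (by positivity), mul_comm (ρ ^ r)]

lemma lintegral_sq_norm_sub_le_gagliardoEnergy (hf : StronglyMeasurable f) (hS : MeasurableSet S)
    (hconv : Convex ℝ S) (hbdd : Bornology.IsBounded S) (hr : finrank ℝ V + 1 ≤ r)
    (hr' : r < finrank ℝ V + 2) :
    ∫⁻ x in S, ∫⁻ y in S, ENNReal.ofReal (‖f x - f y‖ ^ 2) ∂μ ∂μ ≤
      2 * (ENNReal.ofReal ((finrank ℝ V + 2 - r) * diam S ^ r) * gagliardoEnergy μ r f S) := by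
  set M := ENNReal.ofReal ((finrank ℝ V + 2 - r) * diam S ^ r) * gagliardoEnergy μ r f S
  let annulus (k : ℕ) : Set V :=
    closedBall 0 (diam S * (1 / 2) ^ k) \ closedBall 0 (diam S * (1 / 2) ^ k / 2)
  have hr1 : 1 ≤ r := by linarith [(finrank ℝ V).cast_nonneg (α := ℝ)]
  have hannulus (k : ℕ) : ∫⁻ h in annulus k, shiftEnergy μ f S h ∂μ ≤ 2⁻¹ ^ k * M := by
    rcases diam_nonneg.eq_or_lt' (a := diam S) with hzero | hpos
    · simp [annulus, hzero]
    refine (setLIntegral_shiftEnergy_annulus_le hf hS hconv hr hr' (by positivity)).trans ?_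
    have hpow : ((1 / 2 : ℝ) ^ k) ^ r ≤ (1 / 2) ^ k :=
      Real.rpow_le_self_of_le_one (by positivity) (pow_le_one₀ (by norm_num) (by norm_num)) hr1
    have hhalf : (2⁻¹ : ℝ≥0∞) ^ k = ENNReal.ofReal ((1 / 2) ^ k) := by
      rw [ENNReal.ofReal_pow one_half_pos.le, one_div, ENNReal.ofReal_inv_of_pos two_pos,
        ENNReal.ofReal_ofNat]
    rw [← mul_assoc, hhalf, ← ENNReal.ofReal_mul (by positivity),
      Real.mul_rpow hpos.le (by positivity), mul_left_comm ((1 / 2 : ℝ) ^ k),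
      mul_comm (diam S ^ r)]
    gcongr
  calc ∫⁻ x in S, ∫⁻ y in S, ENNReal.ofReal (‖f x - f y‖ ^ 2) ∂μ ∂μ
      = ∫⁻ h, shiftEnergy μ f S h ∂μ := lintegral_sq_norm_sub_eq_lintegral_shiftEnergy hf hS
    _ = ∫⁻ h in ⋃ k, annulus k, shiftEnergy μ f S h ∂μ :=
        (setLIntegral_eq_of_support_subset (support_shiftEnergy_subset_iUnion_annulus hbdd)).symm
    _ ≤ ∑' k, ∫⁻ h in annulus k, shiftEnergy μ f S h ∂μ := lintegral_iUnion_le _ _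
    _ ≤ ∑' k, 2⁻¹ ^ k * M := ENNReal.tsum_le_tsum hannulus
    _ = 2 * M := by
        rw [ENNReal.tsum_mul_right, ENNReal.tsum_geometric, ENNReal.one_sub_inv_two, inv_inv]

end ShiftEnergy

section Average

variable {X Y E : Type*} [MeasurableSpace X] [MeasurableSpace Y] [NormedAddCommGroup E]
  [NormedSpace ℝ E] [CompleteSpace E]

lemma ofReal_sq_norm_average_sub_mul_le {μ : Measure X} [IsFiniteMeasure μ] {f : X → E}
    (hf : MemLp f 2 μ) (c : E) :
    ENNReal.ofReal (‖⨍ x, f x ∂μ - c‖ ^ 2) * μ univ ≤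
      ∫⁻ x, ENNReal.ofReal (‖f x - c‖ ^ 2) ∂μ := by
  rcases eq_zero_or_neZero μ with rfl | hμ
  · simp
  have hconv : ConvexOn ℝ univ fun z : E ↦ ‖z - c‖ ^ 2 :=
    ((convexOn_univ_norm.translate_left (-c)).pow (fun _ _ ↦ norm_nonneg _) 2).congr
      fun z _ ↦ by simp [sub_eq_add_neg]
  have hint : Integrable (fun x ↦ ‖f x - c‖ ^ 2) μ :=
    (hf.sub (memLp_const c)).integrable_norm_pow two_ne_zero
  have hjensen : ‖⨍ x, f x ∂μ - c‖ ^ 2 ≤ ⨍ x, ‖f x - c‖ ^ 2 ∂μ :=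
    hconv.map_average_le (by fun_prop) isClosed_univ (by simp) (hf.integrable one_le_two) hint
  calc ENNReal.ofReal (‖⨍ x, f x ∂μ - c‖ ^ 2) * μ univ
      ≤ ENNReal.ofReal (⨍ x, ‖f x - c‖ ^ 2 ∂μ) * μ univ := by gcongr
    _ = ∫⁻ x, ENNReal.ofReal (‖f x - c‖ ^ 2) ∂μ := by
        rw [ofReal_average hint (.of_forall fun x ↦ by positivity),
          ENNReal.div_mul_cancel (by simp [hμ.out]) (measure_ne_top μ univ)]

lemma ofReal_sq_norm_average_sub_average_mul_le {μ : Measure X} {ν : Measure Y}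
    [IsFiniteMeasure μ] [IsFiniteMeasure ν] {f : X → E} {g : Y → E} (hf : MemLp f 2 μ)
    (hg : MemLp g 2 ν) :
    ENNReal.ofReal (‖⨍ x, f x ∂μ - ⨍ y, g y ∂ν‖ ^ 2) * (μ univ * ν univ) ≤
      ∫⁻ x, ∫⁻ y, ENNReal.ofReal (‖f x - g y‖ ^ 2) ∂ν ∂μ :=
  calc ENNReal.ofReal (‖⨍ x, f x ∂μ - ⨍ y, g y ∂ν‖ ^ 2) * (μ univ * ν univ)
      = ENNReal.ofReal (‖⨍ x, f x ∂μ - ⨍ y, g y ∂ν‖ ^ 2) * μ univ * ν univ := by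
        rw [mul_assoc]
    _ ≤ (∫⁻ x, ENNReal.ofReal (‖f x - ⨍ y, g y ∂ν‖ ^ 2) ∂μ) * ν univ := by
        gcongr
        exact ofReal_sq_norm_average_sub_mul_le hf _
    _ = ∫⁻ x, ENNReal.ofReal (‖⨍ y, g y ∂ν - f x‖ ^ 2) * ν univ ∂μ := by
        simp_rw [norm_sub_rev (f _), lintegral_mul_const' _ _ (measure_ne_top ν univ)]
    _ ≤ ∫⁻ x, ∫⁻ y, ENNReal.ofReal (‖f x - g y‖ ^ 2) ∂ν ∂μ := by
        refine lintegral_mono fun x ↦ ?_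
        simp_rw [norm_sub_rev (f x)]
        exact ofReal_sq_norm_average_sub_mul_le hg _

end Average

lemma dist_le_of_dist_half_le {M : Type*} [PseudoMetricSpace M] {F : ℝ → M} {L : M}
    {a b β C : ℝ} (hβ : 0 < β) (hab : a ≠ b) (hF : Tendsto F (𝓝[≠] a) (𝓝 L))
    (hstep : ∀ x ∈ uIcc a b, x ≠ a → dist (F x) (F ((a + x) / 2)) ≤ C * |x - a| ^ β) :
    dist (F b) L ≤ C * |b - a| ^ β / (1 - 2 ^ (-β)) := by
  let x (k : ℕ) : ℝ := a + (1 / 2) ^ k * (b - a)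
  have hx_ne (k : ℕ) : x k ≠ a := by simpa [x, sub_eq_zero] using hab.symm
  have hx_mem (k : ℕ) : x k ∈ uIcc a b :=
    (convex_uIcc a b).add_smul_sub_mem (t := (1 / 2 : ℝ) ^ k) left_mem_uIcc right_mem_uIcc
      ⟨by positivity, pow_le_one₀ (by norm_num) (by norm_num)⟩
  have hx_abs (k : ℕ) : |x k - a| ^ β = |b - a| ^ β * (2 ^ (-β)) ^ k := by
    have hpow : ((1 / 2 : ℝ) ^ k) ^ β = (2 ^ (-β)) ^ k := by
      rw [← Real.rpow_natCast_mul (by norm_num), mul_comm, Real.rpow_mul_natCast (by norm_num),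
        one_div, Real.inv_rpow zero_le_two, Real.rpow_neg zero_le_two]
    rw [add_sub_cancel_left, abs_mul, abs_of_pos (by positivity : (0 : ℝ) < (1 / 2) ^ k), mul_comm,
      Real.mul_rpow (abs_nonneg _) (by positivity), hpow]
  have hx_step (k : ℕ) : dist (F (x k)) (F (x (k + 1))) ≤ C * |b - a| ^ β * (2 ^ (-β)) ^ k := by
    rw [mul_assoc, ← hx_abs, show x (k + 1) = (a + x k) / 2 by simp only [x, pow_succ]; ring]
    exact hstep _ (hx_mem k) (hx_ne k)
  have hx_lim : Tendsto x atTop (𝓝 a) := by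
    have hpow : Tendsto (fun k : ℕ ↦ (1 / 2 : ℝ) ^ k) atTop (𝓝 0) :=
      tendsto_pow_atTop_nhds_zero_of_lt_one (by norm_num) (by norm_num)
    simpa [x] using (hpow.mul_const (b - a)).const_add a
  have hlim : Tendsto (fun k ↦ F (x k)) atTop (𝓝 L) :=
    hF.comp (tendsto_nhdsWithin_iff.2 ⟨hx_lim, .of_forall hx_ne⟩)
  simpa [x] using dist_le_of_le_geometric_of_tendsto₀ _ _
    (Real.rpow_lt_one_of_one_lt_of_neg one_lt_two (neg_lt_zero.2 hβ)) hx_step hlim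

section Oscillation

variable {E : Type*} [NormedAddCommGroup E] {f : ℝ → E} {s a b : ℝ}

lemma lintegral_uIoc_sq_norm_sub_le (hs : 0 ≤ s) (hs' : s < 1) (hf : Continuous f) (a b : ℝ) :
    ∫⁻ x in Ι a b, ∫⁻ y in Ι a b, ENNReal.ofReal (‖f x - f y‖ ^ 2) ≤
      2 * (ENNReal.ofReal ((1 - s) * |b - a| ^ (2 + s)) *
        gagliardoEnergy volume (2 + s) f (Ι a b)) := by
  have hdiam : diam (Ι a b) = |b - a| := by
    rw [uIoc, Real.diam_Ioc min_le_max, max_sub_min_eq_abs]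
  have hpoincare := lintegral_sq_norm_sub_le_gagliardoEnergy (μ := volume) (r := 2 + s)
    hf.stronglyMeasurable measurableSet_uIoc (convex_Ioc _ _) (isBounded_Ioc _ _)
    (S := Ι a b) (by simp; linarith) (by simp; linarith)
  rwa [hdiam, finrank_self, show ((1 : ℕ) : ℝ) + 2 - (2 + s) = 1 - s by push_cast; ring]
    at hpoincare

variable [NormedSpace ℝ E] [CompleteSpace E]

lemma tendsto_interval_average (hf : Continuous f) (a : ℝ) :
    Tendsto (fun x ↦ ⨍ y in a..x, f y) (𝓝[≠] a) (𝓝 (f a)) := by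
  have hslope := (hf.integral_hasStrictDerivAt a a).hasDerivAt.tendsto_slope
  simpa [slope_fun_def, interval_average_eq] using hslope

lemma norm_interval_average_sub_half_le (hs : 0 ≤ s) (hs' : s < 1) (hf : Continuous f)
    (hab : a ≠ b) (hE : gagliardoEnergy volume (2 + s) f (Ι a b) ≠ ∞) :
    ‖(⨍ x in a..b, f x) - ⨍ x in a..(a + b) / 2, f x‖ ≤
      2 * √((1 - s) * (gagliardoEnergy volume (2 + s) f (Ι a b)).toReal) * |b - a| ^ (s / 2) := by
  set e := (gagliardoEnergy volume (2 + s) f (Ι a b)).toReal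
  set l := |b - a|
  have hl : 0 < l := abs_pos.2 (sub_ne_zero.2 hab.symm)
  have hhalf : |(a + b) / 2 - a| = l / 2 := by
    rw [show (a + b) / 2 - a = (b - a) / 2 by ring, abs_div, abs_two]
  have hsub : Ι a ((a + b) / 2) ⊆ Ι a b := by
    have hmid : a + (1 / 2 : ℝ) • (b - a) ∈ uIcc a b :=
      (convex_uIcc a b).add_smul_sub_mem left_mem_uIcc right_mem_uIcc ⟨by norm_num, by norm_num⟩
    rw [show a + (1 / 2 : ℝ) • (b - a) = (a + b) / 2 by rw [smul_eq_mul]; ring] at hmid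
    exact uIoc_subset_uIoc_of_uIcc_subset_uIcc (uIcc_subset_uIcc_left hmid)
  have hfinite (c : ℝ) : IsFiniteMeasure (volume.restrict (Ι a c)) :=
    inferInstanceAs (IsFiniteMeasure (volume.restrict (Ioc _ _)))
  have hmem (c : ℝ) : MemLp f 2 (volume.restrict (Ι a c)) :=
    (memLp_two_iff_integrable_sq_norm hf.aestronglyMeasurable).2 (hf.norm.pow 2).integrableOn_uIoc
  have hle := (ofReal_sq_norm_average_sub_average_mul_le (hmem b) (hmem ((a + b) / 2))).trans <|
    (lintegral_mono fun x ↦ lintegral_mono_set hsub).trans <|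
      lintegral_uIoc_sq_norm_sub_le hs hs' hf a b
  have hs1 : 0 ≤ 1 - s := by linarith
  rw [Measure.restrict_apply_univ, Measure.restrict_apply_univ, Real.volume_uIoc,
    Real.volume_uIoc, hhalf, ← ENNReal.ofReal_toReal hE, ← ENNReal.ofReal_mul hl.le,
    ← ENNReal.ofReal_mul (by positivity), ← ENNReal.ofReal_mul (by positivity),
    ← ENNReal.ofReal_ofNat 2, ← ENNReal.ofReal_mul zero_le_two,
    ENNReal.ofReal_le_ofReal_iff (by positivity), Real.rpow_add hl, Real.rpow_two] at hle
  have hroot : (l ^ (s / 2)) ^ 2 = l ^ s := by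
    rw [← Real.rpow_mul_natCast hl.le]; norm_num
  refine le_of_sq_le_sq (le_of_mul_le_mul_right (hle.trans_eq ?_)
    (show 0 < l * (l / 2) by positivity)) (by positivity)
  rw [mul_pow, mul_pow, Real.sq_sqrt (by positivity), hroot]
  ring

lemma norm_interval_average_sub_left_le (hs : 0 < s) (hs' : s < 1) (hf : Continuous f)
    (hab : a ≠ b) (hE : gagliardoEnergy volume (2 + s) f (Ι a b) ≠ ∞) :
    ‖(⨍ x in a..b, f x) - f a‖ ≤
      2 * √((1 - s) * (gagliardoEnergy volume (2 + s) f (Ι a b)).toReal) * |b - a| ^ (s / 2)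
        / (1 - 2 ^ (-(s / 2))) := by
  rw [← dist_eq_norm]
  refine dist_le_of_dist_half_le (half_pos hs) hab (tendsto_interval_average hf a) ?_
  intro x hx hxa
  rw [dist_eq_norm]
  have hle : gagliardoEnergy volume (2 + s) f (Ι a x) ≤ gagliardoEnergy volume (2 + s) f (Ι a b) :=
    gagliardoEnergy_mono (uIoc_subset_uIoc_of_uIcc_subset_uIcc (uIcc_subset_uIcc_left hx))
  refine (norm_interval_average_sub_half_le hs.le hs' hf hxa.symm
    (ne_top_of_le_ne_top hE hle)).trans ?_
  gcongr

lemma norm_sub_le_of_gagliardoEnergy_ne_top (hs : 0 < s) (hs' : s < 1) (hf : Continuous f)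
    (hab : a ≠ b) (hE : gagliardoEnergy volume (2 + s) f (Ι a b) ≠ ∞) :
    ‖f a - f b‖ ≤
      4 * √((1 - s) * (gagliardoEnergy volume (2 + s) f (Ι a b)).toReal) * |b - a| ^ (s / 2)
        / (1 - 2 ^ (-(s / 2))) := by
  have ha := norm_interval_average_sub_left_le hs hs' hf hab hE
  have hb := norm_interval_average_sub_left_le hs hs' hf hab.symm (uIoc_comm a b ▸ hE)
  rw [interval_average_symm, uIoc_comm b a, abs_sub_comm a b] at hb
  rw [norm_sub_rev] at ha
  refine (norm_sub_le_norm_sub_add_norm_sub _ _ _).trans ((add_le_add ha hb).trans_eq ?_)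
  ring

lemma ofReal_sq_norm_sub_div_le_gagliardoEnergy (hs : 0 < s) (hs' : s < 1) (hab : a < b)
    (hf : ContinuousOn f (Icc a b)) :
    ENNReal.ofReal (‖f a - f b‖ ^ 2 * (1 - 2 ^ (-(s / 2))) ^ 2 / (16 * (1 - s) * (b - a) ^ s)) ≤
      gagliardoEnergy volume (2 + s) f (Ioc a b) := by
  set F : ℝ → E := IccExtend hab.le ((Icc a b).domRestrict f)
  have hF : Continuous F := hf.domRestrict.Icc_extend'
  have hFf : EqOn F f (Icc a b) := fun x hx ↦ IccExtend_of_mem _ _ hx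
  rw [← gagliardoEnergy_congr measurableSet_Ioc (hFf.mono Ioc_subset_Icc_self), ← uIoc_of_le hab.le,
    ← hFf (left_mem_Icc.2 hab.le), ← hFf (right_mem_Icc.2 hab.le)]
  rcases eq_or_ne (gagliardoEnergy volume (2 + s) F (Ι a b)) ∞ with hinf | hE
  · simp [hinf]
  have hρ : (2 : ℝ) ^ (-(s / 2)) < 1 := Real.rpow_lt_one_of_one_lt_of_neg one_lt_two (by linarith)
  have hosc := norm_sub_le_of_gagliardoEnergy_ne_top hs hs' hF hab.ne hE
  rw [le_div_iff₀ (by linarith), abs_of_pos (sub_pos.2 hab)] at hosc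
  have hroot : ((b - a) ^ (s / 2)) ^ 2 = (b - a) ^ s := by
    rw [← Real.rpow_mul_natCast (by linarith)]; norm_num
  refine ENNReal.ofReal_le_of_le_toReal ((div_le_iff₀ (by positivity)).2 ?_)
  calc ‖F a - F b‖ ^ 2 * (1 - 2 ^ (-(s / 2))) ^ 2
      = (‖F a - F b‖ * (1 - 2 ^ (-(s / 2)))) ^ 2 := (mul_pow _ _ _).symm
    _ ≤ (4 * √((1 - s) * (gagliardoEnergy volume (2 + s) F (Ι a b)).toReal) *
          (b - a) ^ (s / 2)) ^ 2 := by
        gcongr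
    _ = _ := by
        rw [mul_pow, mul_pow, Real.sq_sqrt (by positivity), hroot]
        ring

end Oscillation

section Chain

variable {Φ : Set ℝ → ℝ≥0∞} {g : ℝ → ℝ} {p q δ : ℝ} {m : ℝ≥0∞}

lemma natCast_mul_le_of_increments_of_sub
    (hΦ : ∀ a b c, a ≤ b → b ≤ c → Φ (Ioc a b) + Φ (Ioc b c) ≤ Φ (Ioc a c)) (hδ : 0 < δ)
    (hpq : p ≤ q) (hg : ContinuousOn g (Icc p q))
    (hm : ∀ a ∈ Icc p q, ∀ b ∈ Icc p q, a < b → g b - g a = δ → m ≤ Φ (Ioc a b)) (n : ℕ)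
    (hn : n * δ ≤ g q - g p) : n * m ≤ Φ (Ioc p q) := by
  induction n generalizing p with
  | zero => simp
  | succ n ih =>
    push_cast at hn ⊢
    have hnδ : 0 ≤ n * δ := by positivity
    obtain ⟨x, hx, hgx⟩ : g p + δ ∈ g '' Icc p q :=
      intermediate_value_Icc hpq hg ⟨by linarith, by linarith⟩
    have hpx : p < x := hx.1.lt_of_ne fun h ↦ by subst h; linarith
    have hsub : Icc x q ⊆ Icc p q := Icc_subset_Icc_left hpx.le
    calc (n + 1) * m = m + n * m := by ring
      _ ≤ Φ (Ioc p x) + Φ (Ioc x q) := by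
          gcongr
          · exact hm p (left_mem_Icc.2 hpq) x hx hpx (by linarith)
          · exact ih hx.2 (hg.mono hsub) (fun a ha b hb ↦ hm a (hsub ha) b (hsub hb))
              (by linarith)
      _ ≤ Φ (Ioc p q) := hΦ p x q hpx.le hx.2

lemma natCast_mul_le_of_increments
    (hΦ : ∀ a b c, a ≤ b → b ≤ c → Φ (Ioc a b) + Φ (Ioc b c) ≤ Φ (Ioc a c)) (hδ : 0 < δ)
    (hpq : p ≤ q) (hg : ContinuousOn g (Icc p q))
    (hm : ∀ a ∈ Icc p q, ∀ b ∈ Icc p q, a < b → |g b - g a| = δ → m ≤ Φ (Ioc a b)) (n : ℕ)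
    (hn : n * δ ≤ |g q - g p|) : n * m ≤ Φ (Ioc p q) := by
  rcases le_abs'.1 hn with hneg | hpos
  · refine natCast_mul_le_of_increments_of_sub (g := -g) hΦ hδ hpq hg.neg
      (fun a ha b hb hab h ↦ hm a ha b hb hab ?_) n ?_
    · rw [abs_sub_comm, abs_of_pos] <;> rw [Pi.neg_apply, Pi.neg_apply] at h <;> linarith
    · rw [Pi.neg_apply, Pi.neg_apply]
      linarith
  · refine natCast_mul_le_of_increments_of_sub hΦ hδ hpq hg
      (fun a ha b hb hab h ↦ hm a ha b hb hab ?_) n hpos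
    rw [h, abs_of_pos hδ]

end Chain

lemma norm_exp_two_pi_mul_I_sub (x y : ℝ) :
    ‖Complex.exp (2 * Real.pi * Complex.I * x) - Complex.exp (2 * Real.pi * Complex.I * y)‖ =
      2 * |Real.sin (Real.pi * (x - y))| := by
  have hfactor : Complex.exp (2 * Real.pi * Complex.I * x) -
      Complex.exp (2 * Real.pi * Complex.I * y) =
      Complex.exp ((2 * Real.pi * y : ℝ) * Complex.I) *
        (Complex.exp (Complex.I * (2 * Real.pi * (x - y) : ℝ)) - 1) := by
    rw [mul_sub_one, ← Complex.exp_add]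
    push_cast
    ring_nf
  rw [hfactor, norm_mul, Complex.norm_exp_ofReal_mul_I, one_mul,
    Complex.norm_exp_I_mul_ofReal_sub_one, norm_mul, Real.norm_ofNat, Real.norm_eq_abs]
  ring_nf

section Pigeonhole

lemma exists_eq_iUnion_ordConnected_of_subsingleton_sdiff {α : Type*} [LinearOrder α] {S T : Set α}
    (hS : S.OrdConnected) (hT : (S \ T).Subsingleton) (hTS : T ⊆ S) :
    ∃ P : Bool → Set α, (∀ b, (P b).OrdConnected) ∧ T = ⋃ b, P b := by
  rcases hT.eq_empty_or_singleton with h | ⟨x, hx⟩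
  · exact ⟨fun _ ↦ S, fun _ ↦ hS, by rw [iUnion_const, hTS.antisymm (sdiff_eq_empty.1 h)]⟩
  · have hTx : T = S \ {x} := by rw [← hx, sdiff_sdiff_cancel_left hTS]
    refine ⟨fun b ↦ cond b (S ∩ Iio x) (S ∩ Ioi x), ?_, ?_⟩
    · rintro (_ | _)
      exacts [hS.inter ordConnected_Ioi, hS.inter ordConnected_Iio]
    · rw [← union_eq_iUnion, ← inter_union_distrib_left, Iio_union_Ioi, hTx, sdiff_eq]

lemma exists_lt_dist_of_Ioo_subset_iUnion {κ : Type*} [Fintype κ] {T : κ → Set ℝ} {a b δ : ℝ}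
    (hδ : 0 ≤ δ) (hcover : Ioo a b ⊆ ⋃ k, T k) (hlt : Fintype.card κ * δ < b - a) :
    ∃ k, ∃ y ∈ T k, ∃ y' ∈ T k, δ < dist y y' := by
  by_contra! hle
  have hvolume (k : κ) : volume (T k) ≤ ENNReal.ofReal δ :=
    (Real.volume_le_diam _).trans (ediam_le fun y hy y' hy' ↦ by
      rw [edist_dist]; exact ENNReal.ofReal_le_ofReal (hle k y hy y' hy'))
  refine hlt.not_ge ((ENNReal.ofReal_le_ofReal_iff (by positivity)).1 ?_)
  calc ENNReal.ofReal (b - a) = volume (Ioo a b) := Real.volume_Ioo.symm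
    _ ≤ ∑ k, volume (T k) := (measure_mono hcover).trans (measure_iUnion_fintype_le _ _)
    _ ≤ ∑ _k : κ, ENNReal.ofReal δ := Finset.sum_le_sum fun k _ ↦ hvolume k
    _ = ENNReal.ofReal (Fintype.card κ * δ) := by
        rw [Finset.sum_const, Finset.card_univ, nsmul_eq_mul, ENNReal.ofReal_mul (by positivity),
          ENNReal.ofReal_natCast]

end Pigeonhole

section Degree

/-- `|deg(u, Q)| = d` for a circle-valued map `u` on a Jordan curve `Q`, expressed through a loop
`γ` that runs once around `Q` and a continuous phase `φ` of `u ∘ γ`, measured in full turns. -/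
def HasAbsDegree {X : Type*} [TopologicalSpace X] (u : X → ℂ) (Q : Set X) (d : ℕ) : Prop :=
  ∃ (γ : ℝ → X) (φ : ℝ → ℝ), Continuous γ ∧ Continuous φ ∧ γ 0 = γ 1 ∧ InjOn γ (Ico 0 1) ∧
    γ '' Icc 0 1 = Q ∧
    (∀ τ ∈ Icc (0 : ℝ) 1, u (γ τ) = Complex.exp (2 * Real.pi * Complex.I * φ τ)) ∧
    |φ 1 - φ 0| = d

lemma continuousOn_invFunOn_of_isCompact {Y X : Type*} [TopologicalSpace Y] [Nonempty Y]
    [TopologicalSpace X] [T2Space X] {γ : Y → X} {K S : Set Y} (hK : IsCompact K) (hSK : S ⊆ K)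
    (hγ : ContinuousOn γ K) (hinj : ∀ r ∈ K, ∀ τ ∈ S, γ r = γ τ → r = τ) :
    ContinuousOn (Function.invFunOn γ S) (γ '' S) := by
  have hinv : LeftInvOn (Function.invFunOn γ S) γ S :=
    InjOn.leftInvOn_invFunOn fun r hr τ hτ ↦ hinj r (hSK hr) τ hτ
  refine continuousOn_iff_isClosed.2 fun C hC ↦
    ⟨γ '' (K ∩ C), ((hK.inter_right hC).image_of_continuousOn
      (hγ.mono inter_subset_left)).isClosed, ?_⟩
  refine Subset.antisymm ?_ ?_
  · rintro _ ⟨hC, τ, hτ, rfl⟩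
    rw [mem_preimage, hinv hτ] at hC
    exact ⟨⟨τ, ⟨hSK hτ, hC⟩, rfl⟩, τ, hτ, rfl⟩
  · rintro _ ⟨⟨r, ⟨hrK, hrC⟩, hr⟩, τ, hτ, rfl⟩
    rw [hinj r hrK τ hτ hr] at hrC
    exact ⟨by rwa [mem_preimage, hinv hτ], τ, hτ, rfl⟩

lemma eq_of_apply_eq_of_mem_Ioo {X : Type*} {γ : ℝ → X} (hloop : γ 0 = γ 1)
    (hinj : InjOn γ (Ico 0 1)) {r τ : ℝ} (hr : r ∈ Icc (0 : ℝ) 1) (hτ : τ ∈ Ioo (0 : ℝ) 1)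
    (h : γ r = γ τ) : r = τ := by
  have hτ' : τ ∈ Ico (0 : ℝ) 1 := Ioo_subset_Ico_self hτ
  rcases hr.2.lt_or_eq with hr1 | rfl
  · exact hinj ⟨hr.1, hr1⟩ hτ' h
  · exact absurd (hinj ⟨le_rfl, one_pos⟩ hτ' (hloop.trans h)) hτ.1.ne

variable {X : Type*} [TopologicalSpace X] [T2Space X] {u : X → ℂ} {Q : Set X} {d : ℕ}

lemma HasAbsDegree.exists_phase (h : HasAbsDegree u Q d) :
    ∃ (y₀ : X) (ψ : X → ℝ) (α : ℝ), ContinuousOn ψ (Q \ {y₀}) ∧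
      (∀ y ∈ Q \ {y₀}, u y = Complex.exp (2 * Real.pi * Complex.I * ψ y)) ∧
      Ioo α (α + d) ⊆ ψ '' (Q \ {y₀}) := by
  obtain ⟨γ, φ, hγ, hφ, hloop, hinj, rfl, hu, hd⟩ := h
  have hγ_inj {r τ : ℝ} (hr : r ∈ Icc (0 : ℝ) 1) (hτ : τ ∈ Ioo (0 : ℝ) 1) :=
    eq_of_apply_eq_of_mem_Ioo hloop hinj hr hτ
  have hpunctured : γ '' Icc 0 1 \ {γ 0} = γ '' Ioo 0 1 := by
    refine Subset.antisymm ?_ ?_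
    · rintro _ ⟨⟨τ, hτ, rfl⟩, hne⟩
      exact ⟨τ, ⟨hτ.1.lt_of_ne (by rintro rfl; exact hne rfl),
        hτ.2.lt_of_ne (by rintro rfl; exact hne hloop.symm)⟩, rfl⟩
    · rintro _ ⟨τ, hτ, rfl⟩
      exact ⟨⟨τ, Ioo_subset_Icc_self hτ, rfl⟩,
        fun h ↦ hτ.1.ne (hγ_inj (left_mem_Icc.2 zero_le_one) hτ h.symm)⟩
  set θ := Function.invFunOn γ (Ioo 0 1)
  have hθ_cont : ContinuousOn θ (γ '' Ioo 0 1) :=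
    continuousOn_invFunOn_of_isCompact isCompact_Icc Ioo_subset_Icc_self hγ.continuousOn
      fun r hr τ hτ ↦ hγ_inj hr hτ
  have hθ : LeftInvOn θ γ (Ioo 0 1) := (hinj.mono Ioo_subset_Ico_self).leftInvOn_invFunOn
  have himage : φ ∘ θ '' (γ '' Ioo 0 1) = φ '' Ioo 0 1 := by
    rw [image_comp, hθ.image_image]
  refine ⟨γ 0, φ ∘ θ, min (φ 0) (φ 1), ?_, ?_, ?_⟩ <;> rw [hpunctured]
  · exact hφ.comp_continuousOn hθ_cont
  · rintro _ ⟨τ, hτ, rfl⟩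
    rw [Function.comp_apply, hθ hτ, hu τ (Ioo_subset_Icc_self hτ)]
  · rw [himage, ← hd, ← max_sub_min_eq_abs, add_sub_cancel]
    rcases le_total (φ 0) (φ 1) with hle | hle
    · rw [min_eq_left hle, max_eq_right hle]
      exact intermediate_value_Ioo zero_le_one hφ.continuousOn
    · rw [min_eq_right hle, max_eq_left hle]
      exact intermediate_value_Ioo' zero_le_one hφ.continuousOn

lemma HasAbsDegree.exists_arc {ι : Type*} [Fintype ι] {σ : ι → ℝ → X} {S : Set ℝ} {δ : ℝ}
    (h : HasAbsDegree u (⋃ i, σ i '' S) d) (hd : 0 < d) (hS : S.OrdConnected)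
    (hσ : ∀ i, Continuous (σ i)) (hσ_inj : ∀ i, Function.Injective (σ i)) (hδ : 0 ≤ δ)
    (hcard : 2 * Fintype.card ι * δ < 1) :
    ∃ (i : ι) (g : ℝ → ℝ) (p q : ℝ), p ≤ q ∧ Icc p q ⊆ S ∧ ContinuousOn g (Icc p q) ∧
      (∀ x ∈ Icc p q, u (σ i x) = Complex.exp (2 * Real.pi * Complex.I * g x)) ∧
      d * δ ≤ |g q - g p| := by
  obtain ⟨y₀, ψ, α, hψ, hu, hcover⟩ := h.exists_phase
  set Q := ⋃ i, σ i '' S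
  have hpieces (i : ι) : ∃ P : Bool → Set ℝ, (∀ b, (P b).OrdConnected) ∧
      S ∩ σ i ⁻¹' {y₀}ᶜ = ⋃ b, P b := by
    have hsub : (S \ (S ∩ σ i ⁻¹' {y₀}ᶜ)).Subsingleton :=
      ((subsingleton_singleton (a := y₀)).preimage (hσ_inj i)).anti fun x hx ↦ by
        simpa [hx.1] using hx.2
    exact exists_eq_iUnion_ordConnected_of_subsingleton_sdiff hS hsub inter_subset_left
  choose P hP_conn hP using hpieces
  have hcover' : Ioo α (α + d) ⊆ ⋃ k : ι × Bool, (ψ ∘ σ k.1) '' P k.1 k.2 := by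
    intro y hy
    obtain ⟨z, ⟨hz, hne⟩, rfl⟩ := hcover hy
    obtain ⟨i, x, hx, rfl⟩ := mem_iUnion.1 hz
    obtain ⟨b, hb⟩ := mem_iUnion.1 ((hP i).subset ⟨hx, hne⟩)
    exact mem_iUnion.2 ⟨(i, b), x, hb, rfl⟩
  have hd' : (0 : ℝ) < d := by exact_mod_cast hd
  obtain ⟨⟨i, b⟩, _, ⟨x, hx, rfl⟩, _, ⟨x', hx', rfl⟩, hdist⟩ :=
    exists_lt_dist_of_Ioo_subset_iUnion (δ := d * δ) (by positivity) hcover' (by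
      rw [Fintype.card_prod, Fintype.card_bool]
      push_cast
      nlinarith)
  have hsub : uIcc x x' ⊆ S ∩ σ i ⁻¹' {y₀}ᶜ :=
    ((hP_conn i b).uIcc_subset hx hx').trans (by rw [hP i]; exact subset_iUnion _ b)
  have hmaps : MapsTo (σ i) (uIcc x x') (Q \ {y₀}) := fun z hz ↦
    ⟨mem_iUnion.2 ⟨i, z, (hsub hz).1, rfl⟩, (hsub hz).2⟩
  refine ⟨i, ψ ∘ σ i, min x x', max x x', min_le_max, hsub.trans inter_subset_left,
    hψ.comp (hσ i).continuousOn hmaps, fun z hz ↦ hu _ (hmaps hz), hdist.le.trans_eq ?_⟩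
  rcases le_total x x' with hle | hle
  · rw [min_eq_left hle, max_eq_right hle, dist_comm]; rfl
  · rw [min_eq_right hle, max_eq_left hle]; rfl

end Degree

section CircleValued

variable {s : ℝ}

lemma natCast_mul_le_gagliardoEnergy_of_phase (hs : 0 < s) (hs' : s < 1) {f : ℝ → ℂ} {g : ℝ → ℝ}
    {p q l δ : ℝ} (hpq : p ≤ q) (hl : q - p ≤ l) (hg : ContinuousOn g (Icc p q))
    (hf : ∀ x ∈ Icc p q, f x = Complex.exp (2 * Real.pi * Complex.I * g x)) (hδ : 0 < δ) (n : ℕ)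
    (hn : n * δ ≤ |g q - g p|) :
    n * ENNReal.ofReal ((2 * Real.sin (Real.pi * δ)) ^ 2 * (1 - 2 ^ (-(s / 2))) ^ 2 /
        (16 * (1 - s) * l ^ s)) ≤ gagliardoEnergy volume (2 + s) f (Ioc p q) := by
  refine natCast_mul_le_of_increments (fun a b c hab hbc ↦ ?_) hδ hpq hg
    (fun a ha b hb hab hgab ↦ ?_) n hn
  · exact gagliardoEnergy_add_le_of_disjoint measurableSet_Ioc (Ioc_disjoint_Ioc_of_le le_rfl)
      (Ioc_subset_Ioc_right hbc) (Ioc_subset_Ioc_left hab)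
  · have hsub : Icc a b ⊆ Icc p q := Icc_subset_Icc ha.1 hb.2
    have hf_cont : ContinuousOn f (Icc a b) := by
      refine ContinuousOn.congr ?_ fun x hx ↦ hf x (hsub hx)
      have := hg.mono hsub
      fun_prop
    have hnorm : ‖f a - f b‖ ^ 2 = (2 * Real.sin (Real.pi * δ)) ^ 2 := by
      rw [hf a ha, hf b hb, norm_exp_two_pi_mul_I_sub, mul_pow, mul_pow, sq_abs, ← hgab]
      rcases abs_choice (g b - g a) with h | h <;> rw [h]
      · rw [← neg_sub, mul_neg, Real.sin_neg, neg_sq]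
      · rw [neg_sub]
    refine le_trans ?_ (ofReal_sq_norm_sub_div_le_gagliardoEnergy hs hs' hab hf_cont)
    rw [hnorm]
    gcongr
    linarith [ha.1, hb.2]

lemma sq_div_mul_rpow_neg_le {s₀ t : ℝ} (hs₀ : 0 ≤ s₀) (hs : s₀ ≤ s) (hs' : s < 1) (ht : 0 < t) :
    (1 - 2 ^ (-(s₀ / 2))) ^ 2 / 32 / (1 - s) * t ^ (-s) ≤
      (1 - 2 ^ (-(s / 2))) ^ 2 / (16 * (1 - s) * (2 * t) ^ s) := by
  have hs1 : 0 < 1 - s := sub_pos.2 hs'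
  have hpow : 0 ≤ 1 - (2 : ℝ) ^ (-(s₀ / 2)) :=
    sub_nonneg.2 (Real.rpow_le_one_of_one_le_of_nonpos one_le_two (by linarith))
  have htwo : (2 : ℝ) ^ s ≤ 2 := Real.rpow_le_self_of_one_le one_le_two hs'.le
  calc (1 - 2 ^ (-(s₀ / 2))) ^ 2 / 32 / (1 - s) * t ^ (-s)
      = (1 - 2 ^ (-(s₀ / 2))) ^ 2 / (16 * (1 - s) * (2 * t ^ s)) := by
        rw [Real.rpow_neg ht.le]; field_simp; ring
    _ ≤ (1 - 2 ^ (-(s / 2))) ^ 2 / (16 * (1 - s) * (2 * t) ^ s) := by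
        rw [Real.mul_rpow zero_le_two ht.le]
        gcongr
        exact one_le_two

lemma HasAbsDegree.natCast_mul_le_sum_gagliardoEnergy {ι X : Type*} [Fintype ι] [MetricSpace X]
    [MeasurableSpace X] [BorelSpace X] {σ : ι → ℝ → X} {u : X → ℂ} {t δ : ℝ} {d : ℕ}
    (h : HasAbsDegree u (⋃ i, σ i '' Icc (-t) t) d) (hs : 0 < s) (hs' : s < 1)
    (hσ : ∀ i, Isometry (σ i)) (hδ : 0 < δ) (hcard : 2 * Fintype.card ι * δ < 1) :
    d * ENNReal.ofReal ((2 * Real.sin (Real.pi * δ)) ^ 2 * (1 - 2 ^ (-(s / 2))) ^ 2 /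
        (16 * (1 - s) * (2 * t) ^ s)) ≤
      ∑ i, gagliardoEnergy μH[1] (2 + s) u (σ i '' Icc (-t) t) := by
  rcases d.eq_zero_or_pos with rfl | hd
  · simp
  obtain ⟨i, g, p, q, hpq, hsub, hg, hphase, hlarge⟩ := h.exists_arc hd ordConnected_Icc
    (fun i ↦ (hσ i).continuous) (fun i ↦ (hσ i).injective) hδ.le hcard
  have hlength : q - p ≤ 2 * t := by
    linarith [(hsub (left_mem_Icc.2 hpq)).1, (hsub (right_mem_Icc.2 hpq)).2]
  calc d * ENNReal.ofReal ((2 * Real.sin (Real.pi * δ)) ^ 2 *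
          (1 - 2 ^ (-(s / 2))) ^ 2 / (16 * (1 - s) * (2 * t) ^ s))
      ≤ gagliardoEnergy volume (2 + s) (u ∘ σ i) (Ioc p q) :=
        natCast_mul_le_gagliardoEnergy_of_phase hs hs' hpq hlength hg hphase hδ d hlarge
    _ ≤ gagliardoEnergy μH[1] (2 + s) (u ∘ σ i) (Icc (-t) t) := by
        rw [hausdorffMeasure_real]
        exact gagliardoEnergy_mono (Ioc_subset_Icc_self.trans hsub)
    _ = gagliardoEnergy μH[1] (2 + s) u (σ i '' Icc (-t) t) :=
        (gagliardoEnergy_hausdorffMeasure_image (hσ i) zero_le_one _ _ _).symm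
    _ ≤ _ := Finset.single_le_sum
        (f := fun i ↦ gagliardoEnergy μH[1] (2 + s) u (σ i '' Icc (-t) t))
        (fun _ _ ↦ zero_le) (Finset.mem_univ i)

end CircleValued

/-- The arc length parametrizations of the four sides of the square by `Icc (-t) t`. -/
def squareSide (z v w : EuclideanSpace ℝ (Fin 2)) (t : ℝ) :
    Fin 4 → ℝ → EuclideanSpace ℝ (Fin 2) :=
  ![fun a ↦ z + a • v - t • w, fun b ↦ z + t • v + b • w,
    fun a ↦ z + a • v + t • w, fun b ↦ z - t • v + b • w]

lemma isometry_squareSide {z v w : EuclideanSpace ℝ (Fin 2)} (hv : ‖v‖ = 1) (hw : ‖w‖ = 1)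
    (t : ℝ) (i : Fin 4) : Isometry (squareSide z v w t i) := by
  refine Isometry.of_dist_eq fun a b ↦ ?_
  fin_cases i <;> simp [squareSide, dist_eq_norm, ← sub_smul, norm_smul, hv, hw]

lemma squareBdry_eq_iUnion (z v w : EuclideanSpace ℝ (Fin 2)) (t : ℝ) :
    squareBdry z v w t = ⋃ i, squareSide z v w t i '' Icc (-t) t := by
  ext x
  simp only [squareBdry, mem_union, mem_iUnion, Fin.exists_fin_succ, IsEmpty.exists_iff, or_false,
    or_assoc]
  rfl

theorem stmt_7_general {ι : Type*} [Fintype ι] {s₀ : ℝ} (hs₀ : 0 < s₀) :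
    ∃ c > (0 : ℝ), ∀ s ∈ Ico s₀ 1,
      ∀ (X : Type*) [MetricSpace X] [MeasurableSpace X] [BorelSpace X] (σ : ι → ℝ → X) (t : ℝ),
        0 < t → (∀ i, Isometry (σ i)) →
      ∀ (u : X → ℂ) (d : ℕ), HasAbsDegree u (⋃ i, σ i '' Icc (-t) t) d →
        ENNReal.ofReal (c * d / (1 - s) * t ^ (-s)) ≤
          ∑ i, gagliardoEnergy μH[1] (2 + s) u (σ i '' Icc (-t) t) := by
  set δ : ℝ := (2 * (Fintype.card ι + 1))⁻¹
  have hδ : 0 < δ := by positivity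
  have hδ1 : δ < 1 := inv_lt_one_of_one_lt₀ (by linarith [(Fintype.card ι).cast_nonneg (α := ℝ)])
  have hcard : 2 * Fintype.card ι * δ < 1 := by
    rw [← div_eq_mul_inv, div_lt_one (by positivity)]; linarith
  have hsin : 0 < Real.sin (Real.pi * δ) :=
    Real.sin_pos_of_pos_of_lt_pi (by positivity) (mul_lt_of_lt_one_right Real.pi_pos hδ1)
  have hρ : (2 : ℝ) ^ (-(s₀ / 2)) < 1 :=
    Real.rpow_lt_one_of_one_lt_of_neg one_lt_two (by linarith)
  refine ⟨(2 * Real.sin (Real.pi * δ)) ^ 2 * ((1 - 2 ^ (-(s₀ / 2))) ^ 2 / 32), by positivity,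
    fun s ⟨hs, hs'⟩ X _ _ _ σ t ht hσ u d hu ↦ ?_⟩
  calc ENNReal.ofReal ((2 * Real.sin (Real.pi * δ)) ^ 2 * ((1 - 2 ^ (-(s₀ / 2))) ^ 2 / 32) * d /
          (1 - s) * t ^ (-s))
      = d * ENNReal.ofReal ((2 * Real.sin (Real.pi * δ)) ^ 2 *
          ((1 - 2 ^ (-(s₀ / 2))) ^ 2 / 32 / (1 - s) * t ^ (-s))) := by
        rw [← ENNReal.ofReal_natCast, ← ENNReal.ofReal_mul (by positivity)]
        ring_nf
    _ ≤ d * ENNReal.ofReal ((2 * Real.sin (Real.pi * δ)) ^ 2 *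
          (1 - 2 ^ (-(s / 2))) ^ 2 / (16 * (1 - s) * (2 * t) ^ s)) := by
        rw [mul_div_assoc]
        gcongr
        exact sq_div_mul_rpow_neg_le hs₀.le hs hs' ht
    _ ≤ ∑ i, gagliardoEnergy μH[1] (2 + s) u (σ i '' Icc (-t) t) :=
        hu.natCast_mul_le_sum_gagliardoEnergy (hs₀.trans_le hs) hs' hσ hδ hcard

/-- Energy of a circle-valued map on the boundary of a square, from its degree:
for every s₀ ∈ (0,1) there is c = c(s₀) > 0 such that for every s ∈ [s₀,1), every
square Q of side length 2t with sides L₁,…,L₄, and every continuous u : Q → 𝕊¹ with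
|deg(u,Q)| = d (expressed by a continuous parametrizing loop γ of Q and a continuous
lift φ with u∘γ = e^{2πiφ} and |φ(1)-φ(0)| = d), one has
Σᵢ [u]²_{H^{(1+s)/2}(Lᵢ)} ≥ c · d/(1-s) · t^{-s}. -/
theorem stmt_7 :
    ∀ s₀ ∈ Ioo (0 : ℝ) 1, ∃ c > (0 : ℝ), ∀ s ∈ Ico s₀ 1,
      ∀ (z v w : EuclideanSpace ℝ (Fin 2)) (t : ℝ), 0 < t →
        ‖v‖ = 1 → ‖w‖ = 1 → ⟪v, w⟫ = (0 : ℝ) →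
      ∀ u : EuclideanSpace ℝ (Fin 2) → ℂ,
        ContinuousOn u (squareBdry z v w t) →
        (∀ p ∈ squareBdry z v w t, ‖u p‖ = 1) →
      ∀ d : ℕ,
        (∃ (γ : ℝ → EuclideanSpace ℝ (Fin 2)) (φ : ℝ → ℝ),
          Continuous γ ∧ Continuous φ ∧ γ 0 = γ 1 ∧ InjOn γ (Ico 0 1) ∧
          γ '' Icc 0 1 = squareBdry z v w t ∧
          (∀ τ ∈ Icc (0 : ℝ) 1,
            u (γ τ) = Complex.exp (2 * Real.pi * Complex.I * φ τ)) ∧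
          |φ 1 - φ 0| = d) →
        segSeminorm s u (sqSide1 z v w t) + segSeminorm s u (sqSide2 z v w t)
            + segSeminorm s u (sqSide3 z v w t) + segSeminorm s u (sqSide4 z v w t)
          ≥ ENNReal.ofReal (c * d / (1 - s) * t ^ (-s)) := by
  intro s₀ hs₀
  obtain ⟨c, hc, hbound⟩ := stmt_7_general (ι := Fin 4) hs₀.1
  refine ⟨c, hc, fun s hs z v w t ht hv hw _ u _ _ d hdeg ↦ ?_⟩
  rw [squareBdry_eq_iUnion] at hdeg
  exact (hbound s hs _ (squareSide z v w t) t ht (isometry_squareSide hv hw t) u d hdeg).trans_eq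
    (Fin.sum_univ_four _)
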